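/- Let S* be a subset of S. Then the two-sided ideal of 𝒜 generated by S* equals 𝒥 if and only if for every upper prime U and every lower prime D there exist words U′ and D′ with U′ ∼ U and D′ ∼ D such that either U′D′ − D′U′ ∈ S* or D′U′ − U′D′ ∈ S*. -/

import Mathlib

/-!
The proof rests on two observations about an ideal spanned by binomials `toA X - toA Y`.

* If every generator is a difference of two words that are identified by some congruence `c` of
  the free monoid, then words congruent modulo the ideal are identified by `c`, because `𝒜` maps
  onto the monoid algebra of the quotient by `c` (`con_of_mem_span`).
* A balanced nonempty word starts with a prime, and a prime is an upper or a lower prime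
  (`exists_prefix_signedPrime`).

Sufficiency. By induction on total length, balanced words commute modulo the ideal `I` of `S*`
(`commute_of_balanced`). Factoring into primes reduces this to two primes. For an upper prime `U`
and a lower prime `D`, the induction hypothesis shows `U ≡ U'` and `D ≡ D'` modulo `I`, these words
being shorter than `UD`, and `U'`, `D'` commute modulo `I` by assumption. Two primes of the same
kind are `xAy` and `xBy` with `{x, y} = {L, R}`; the balanced words `A`, `B`, `yx` commute
pairwise by induction, so `xA(yx)By ≡ xB(yx)Ay`.

Necessity. Let `T` be the set of words `U'D'` with `U'` an upper prime equivalent to `U` and `D'` a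
lower prime equivalent to `D`. A swap of adjacent balanced factors `F`, `G` inside a member of `T`
either takes place inside `U'` or inside `D'`, and then stays in `T`, or it has `F = U'`, `G = D'`
(`swap_mem_primePairs`). If no swap of the last kind comes from `S*`, then the syntactic congruence
of `T` identifies the two words of each element of `S*`; if also `S*` generates `𝒥`, it identifies
`UD` with `DU`, although `UD ∈ T` and `DU ∉ T`.
-/


/-- A word is a finite sequence of letters; the letter `L` is `false`, the letter `R` is `true`. -/
abbrev Word := List Bool

/-- A word is balanced if it contains equally many `L`s and `R`s. -/
def BalancedWord (w : Word) : Prop := w.count true = w.count false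

/-- The element of the free `ℂ`-algebra on two generators corresponding to a word. -/
noncomputable def toA (w : Word) : FreeAlgebra ℂ Bool :=
  (w.map (FreeAlgebra.ι ℂ)).prod

/-- The set `S = {FG - GF : F, G nonempty balanced words}`. -/
def Sset : Set (FreeAlgebra ℂ Bool) :=
  {x | ∃ F G : Word, F ≠ [] ∧ G ≠ [] ∧ BalancedWord F ∧ BalancedWord G ∧
    x = toA F * toA G - toA G * toA F}

/-- The two-sided ideal `𝒥` generated by `S`. -/
noncomputable def Jideal : TwoSidedIdeal (FreeAlgebra ℂ Bool) := TwoSidedIdeal.span Sset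

/-- `X ∼ Y` iff `X - Y ∈ 𝒥`. -/
def WEquiv (X Y : Word) : Prop := toA X - toA Y ∈ Jideal

/-- Words `X` and `Y` are related by a swap of type `(F, G)`. -/
def SwapOfType (F G X Y : Word) : Prop :=
  ∃ W₁ W₂ : Word,
    (X = W₁ ++ F ++ G ++ W₂ ∧ Y = W₁ ++ G ++ F ++ W₂) ∨
    (X = W₁ ++ G ++ F ++ W₂ ∧ Y = W₁ ++ F ++ G ++ W₂)

/-- Words `X` and `Y` are related by a swap. -/
def RelatedBySwap (X Y : Word) : Prop :=
  ∃ F G : Word, F ≠ [] ∧ G ≠ [] ∧ BalancedWord F ∧ BalancedWord G ∧ SwapOfType F G X Y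

/-- The `k`-th elevation of a word: number of `R`s minus number of `L`s among the
first `k` letters. -/
def elev (w : Word) (k : ℕ) : ℤ :=
  ((w.take k).count true : ℤ) - ((w.take k).count false : ℤ)

/-- The elevation multiset `E(W) = {e_k(W) : 0 ≤ k ≤ n}`. -/
def elevMultiset (w : Word) : Multiset ℤ :=
  (Multiset.range (w.length + 1)).map (elev w)

/-- A word is prime if it is nonempty, balanced, and cannot be written as the
product of two nonempty balanced words. -/
def IsPrimeWord (w : Word) : Prop :=
  w ≠ [] ∧ BalancedWord w ∧
    ¬ ∃ u v : Word, u ≠ [] ∧ v ≠ [] ∧ BalancedWord u ∧ BalancedWord v ∧ w = u ++ v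

/-- An upper prime: a prime word with `e_k > 0` for `1 ≤ k ≤ n - 1`. -/
def UpperPrime (w : Word) : Prop :=
  IsPrimeWord w ∧ ∀ k, 1 ≤ k → k ≤ w.length - 1 → 0 < elev w k

/-- A lower prime: a prime word with `e_k < 0` for `1 ≤ k ≤ n - 1`. -/
def LowerPrime (w : Word) : Prop :=
  IsPrimeWord w ∧ ∀ k, 1 ≤ k → k ≤ w.length - 1 → elev w k < 0

/-- A word is reduced if it contains no contiguous subword `UD` with `U` an
upper prime and `D` a lower prime. -/
def Reduced (W : Word) : Prop :=
  ¬ ∃ U D W₁ W₂ : Word, UpperPrime U ∧ LowerPrime D ∧ W = W₁ ++ U ++ D ++ W₂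

/-- Alphabetical (lexicographic) order on words, with `L < R`. -/
def WordLt (X Y : Word) : Prop := List.Lex (· < ·) X Y

/-! ### Heights and signed primes -/

/-- The final elevation of a word: number of `R`s minus number of `L`s. -/
def ht (w : Word) : ℤ := (w.count true : ℤ) - (w.count false : ℤ)

@[simp] lemma ht_nil : ht [] = 0 := by simp [ht]

@[simp] lemma ht_append (u v : Word) : ht (u ++ v) = ht u + ht v := by
  simp only [ht, List.count_append]; push_cast; ring

lemma ht_cons (x : Bool) (v : Word) : ht (x :: v) = ht [x] + ht v := ht_append [x] v

lemma ht_singleton (x : Bool) : ht [x] = if x then 1 else -1 := by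
  cases x <;> simp [ht]

lemma balanced_iff_ht (w : Word) : BalancedWord w ↔ ht w = 0 := by
  unfold BalancedWord ht; omega

/-- Upper primes (`s = 1`) and lower primes (`s = -1`) at once: nonempty words of height zero, all
of whose proper nonempty prefixes have height of the sign of `s`. -/
def SignedPrime (s : ℤ) (w : Word) : Prop :=
  w ≠ [] ∧ ht w = 0 ∧ ∀ a b, w = a ++ b → a ≠ [] → b ≠ [] → 0 < s * ht a

lemma signedPrime_of_prime {s : ℤ} {w : Word} (h : IsPrimeWord w)
    (he : ∀ k, 1 ≤ k → k ≤ w.length - 1 → 0 < s * elev w k) : SignedPrime s w := by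
  refine ⟨h.1, (balanced_iff_ht w).1 h.2.1, ?_⟩
  rintro a b rfl ha hb
  have ha' := List.length_pos_iff.2 ha
  have hb' := List.length_pos_iff.2 hb
  have := he a.length (by omega) (by simp only [List.length_append]; omega)
  simpa [elev, ht] using this

lemma SignedPrime.prime {s : ℤ} {w : Word} (h : SignedPrime s w) :
    IsPrimeWord w ∧ ∀ k, 1 ≤ k → k ≤ w.length - 1 → 0 < s * elev w k := by
  obtain ⟨h0, h1, h2⟩ := h
  refine ⟨⟨h0, (balanced_iff_ht w).2 h1, ?_⟩, ?_⟩
  · rintro ⟨u, v, hu, hv, bu, -, rfl⟩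
    have := h2 u v rfl hu hv
    rw [(balanced_iff_ht u).1 bu] at this
    simp at this
  · intro k hk hk'
    have hl := List.length_pos_iff.2 h0
    refine h2 (w.take k) (w.drop k) (List.take_append_drop k w).symm ?_ ?_
    · apply List.ne_nil_of_length_pos; rw [List.length_take]; omega
    · apply List.ne_nil_of_length_pos; rw [List.length_drop]; omega

lemma upperPrime_iff (w : Word) : UpperPrime w ↔ SignedPrime 1 w := by
  constructor
  · rintro ⟨h, h'⟩; exact signedPrime_of_prime h (by simpa using h')
  · intro h; have := h.prime; exact ⟨this.1, by simpa using this.2⟩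

lemma lowerPrime_iff (w : Word) : LowerPrime w ↔ SignedPrime (-1) w := by
  constructor
  · rintro ⟨h, h'⟩; exact signedPrime_of_prime h (by simpa using h')
  · intro h; have := h.prime; exact ⟨this.1, by simpa using this.2⟩

/-- A word of height zero that does not return to height zero in between is a signed prime, as its
height changes by one at each letter and so cannot change sign without vanishing. -/
lemma signedPrime_of_no_return {w : Word} (h0 : w ≠ []) (h1 : ht w = 0)
    (h2 : ∀ a b, w = a ++ b → a ≠ [] → b ≠ [] → ht a ≠ 0) :
    SignedPrime 1 w ∨ SignedPrime (-1) w := by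
  obtain ⟨x, w', rfl⟩ := List.exists_cons_of_ne_nil h0
  have key : ∀ a b, x :: w' = a ++ b → a ≠ [] → b ≠ [] → 0 < ht [x] * ht a := by
    intro a
    induction a using List.reverseRecOn with
    | nil => intro b _ h; exact absurd rfl h
    | append_singleton a z ih =>
      intro b hb _ hb0
      by_cases ha : a = []
      · subst ha
        have : x = z := by simpa using (List.cons.inj hb).1
        subst this
        rw [List.nil_append, ht_singleton]
        split <;> norm_num
      · have i := ih (z :: b) (by simpa using hb) ha (by simp)
        have j := h2 _ _ hb (by simp) hb0
        rw [ht_append, ht_singleton] at j ⊢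
        rw [ht_singleton] at i ⊢
        cases x <;> cases z <;> simp at i j ⊢ <;> omega
  rw [ht_singleton] at key
  cases x
  · right; exact ⟨h0, h1, by simpa using key⟩
  · left; exact ⟨h0, h1, by simpa using key⟩

lemma exists_prefix_signedPrime {w : Word} (h0 : w ≠ []) (h1 : ht w = 0) :
    ∃ p v, w = p ++ v ∧ ht v = 0 ∧ (SignedPrime 1 p ∨ SignedPrime (-1) p) := by
  induction hn : w.length using Nat.strong_induction_on generalizing w with
  | _ n ih =>
    by_cases h : ∃ a b, w = a ++ b ∧ a ≠ [] ∧ b ≠ [] ∧ ht a = 0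
    · obtain ⟨a, b, rfl, ha, hb, hz⟩ := h
      have hb' := List.length_pos_iff.2 hb
      obtain ⟨p, v, rfl, hv, hp⟩ :=
        ih a.length (by simp only [List.length_append] at hn; omega) ha hz rfl
      refine ⟨p, v ++ b, by simp, ?_, hp⟩
      simp only [ht_append] at h1 hz hv ⊢
      omega
    · push Not at h
      exact ⟨w, [], by simp, by simp, signedPrime_of_no_return h0 h1 h⟩

/-- A signed prime is `xAy` with `A` balanced and `x`, `y` the two letters in the order given by
the sign. -/
lemma SignedPrime.shape {s : ℤ} {x : Bool} (hs : s = ht [x]) {w : Word}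
    (h : SignedPrime s w) : ∃ A, ht A = 0 ∧ w = [x] ++ A ++ [!x] := by
  obtain ⟨h0, h1, h2⟩ := h
  obtain ⟨z, w', rfl⟩ := List.exists_cons_of_ne_nil h0
  have hw' : w' ≠ [] := by
    rintro rfl
    rw [ht_singleton] at h1
    cases z <;> simp at h1
  obtain ⟨A, y, rfl⟩ : ∃ A y, w' = A ++ [y] :=
    ⟨w'.dropLast, w'.getLast hw', (List.dropLast_append_getLast hw').symm⟩
  have a1 := h2 [z] (A ++ [y]) rfl (by simp) (by simp)
  have a2 := h2 (z :: A) [y] rfl (by simp) (by simp)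
  rw [ht_cons] at a2
  rw [ht_cons, ht_append] at h1
  subst hs
  simp only [ht_singleton] at a1 a2 h1
  refine ⟨A, ?_, ?_⟩ <;> cases x <;> cases y <;> cases z <;> simp at a1 a2 h1 ⊢ <;> omega

/-- Swapping adjacent balanced factors of a signed prime gives a signed prime: a proper prefix of
the new word has the height of some proper prefix of the old one. -/
lemma SignedPrime.swap {s : ℤ} {W F G V : Word} (hF : F ≠ []) (hG : G ≠ [])
    (bF : ht F = 0) (bG : ht G = 0) (h : SignedPrime s (W ++ (F ++ (G ++ V)))) :
    SignedPrime s (W ++ (G ++ (F ++ V))) := by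
  obtain ⟨h0, h1, h2⟩ := h
  refine ⟨by simp [hF], by simp only [ht_append] at h1 ⊢; omega, ?_⟩
  intro a b hab ha hb
  rcases List.append_eq_append_iff.1 hab with ⟨c, rfl, hc⟩ | ⟨c, rfl, hc⟩
  · rcases List.append_eq_append_iff.1 hc with ⟨d, rfl, hd⟩ | ⟨d, rfl, hd⟩
    · rcases List.append_eq_append_iff.1 hd with ⟨e, rfl, he⟩ | ⟨e, rfl, he⟩
      · have := h2 (W ++ (F ++ (G ++ e))) b (by simp [he]) (by simp [hF]) hb
        simp only [ht_append] at this ⊢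
        convert this using 2; omega
      · by_cases he0 : e = []
        · subst he0
          have := h2 (W ++ (d ++ G)) b (by simp_all) (by simp [hG]) hb
          simp only [List.append_nil, ht_append] at this bF ⊢
          convert this using 2; omega
        · by_cases hW : W ++ d = []
          · obtain ⟨rfl, rfl⟩ := List.append_eq_nil_iff.1 hW
            have := h2 e (G ++ V) (by simp) he0 (by simp [hG])
            simp only [List.nil_append, List.append_nil] at this bF ⊢
            convert this using 2; omega
          · have := h2 (W ++ d) (e ++ (G ++ V)) (by simp) hW (by simp [he0])
            simp only [ht_append] at this ⊢
            convert this using 2; omega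
    · by_cases hd0 : d = []
      · subst hd0
        have := h2 (W ++ F) (c ++ V) (by simp) (by simp [hF]) (by simpa using fun h _ => hG h)
        simp only [List.append_nil, ht_append] at this bG ⊢
        convert this using 2; omega
      · have := h2 (W ++ (F ++ c)) (d ++ V) (by simp) (by simp [hF]) (by simp [hd0])
        simp only [ht_append] at this ⊢
        convert this using 2; omega
  · exact h2 a (c ++ (F ++ (G ++ V))) (by simp) ha (by simp [hF])

/-! ### Ideals spanned by differences of words -/

@[simp] lemma toA_nil : toA [] = 1 := by simp [toA]

@[simp] lemma toA_append (u v : Word) : toA (u ++ v) = toA u * toA v := by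
  simp [toA]

/-- A congruence of the free monoid that identifies the two words of each generator identifies any
two words that agree modulo the ideal: `𝒜` maps to the monoid algebra of the quotient monoid, where
the images of words are basis elements. -/
lemma con_of_mem_span (c : Con (FreeMonoid Bool)) {A : Set (FreeAlgebra ℂ Bool)}
    (hA : ∀ s ∈ A, ∃ X Y : Word, c (FreeMonoid.ofList X) (FreeMonoid.ofList Y) ∧
      s = toA X - toA Y)
    {X Y : Word} (h : toA X - toA Y ∈ TwoSidedIdeal.span A) :
    c (FreeMonoid.ofList X) (FreeMonoid.ofList Y) := by
  let φ : FreeAlgebra ℂ Bool →ₐ[ℂ] MonoidAlgebra ℂ c.Quotient :=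
    FreeAlgebra.lift ℂ fun b => MonoidAlgebra.of ℂ _ (c.mk' (FreeMonoid.of b))
  have hφ : ∀ w : Word, φ (toA w) = MonoidAlgebra.of ℂ _ (c.mk' (FreeMonoid.ofList w)) := by
    intro w
    induction w with
    | nil => rw [toA_nil, map_one, FreeMonoid.ofList_nil, map_one, map_one]
    | cons x w ih =>
      rw [FreeMonoid.ofList_cons, map_mul, map_mul, ← ih]
      have : toA (x :: w) = FreeAlgebra.ι ℂ x * toA w := by simp [toA]
      rw [this, map_mul, FreeAlgebra.lift_ι_apply]
  have hle : TwoSidedIdeal.span A ≤ TwoSidedIdeal.ker φ := by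
    rw [TwoSidedIdeal.span_le]
    intro s hs
    obtain ⟨P, Q, hPQ, rfl⟩ := hA s hs
    rw [SetLike.mem_coe, TwoSidedIdeal.mem_ker, map_sub, hφ, hφ, sub_eq_zero]
    exact congrArg _ ((Con.eq c).2 hPQ)
  have h' := hle h
  rw [TwoSidedIdeal.mem_ker, map_sub, hφ, hφ, sub_eq_zero] at h'
  exact (Con.eq c).1 (MonoidAlgebra.of_injective h')

lemma WEquiv.refl (X : Word) : WEquiv X X := by
  unfold WEquiv; rw [sub_self]; exact Jideal.zero_mem

lemma WEquiv.trans {X Y Z : Word} (h : WEquiv X Y) (h' : WEquiv Y Z) : WEquiv X Z := by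
  have := Jideal.add_mem h h'
  rwa [sub_add_sub_cancel] at this

lemma WEquiv.swap {F G : Word} (hF : F ≠ []) (hG : G ≠ []) (bF : ht F = 0) (bG : ht G = 0)
    (W V : Word) : WEquiv (W ++ (G ++ (F ++ V))) (W ++ (F ++ (G ++ V))) := by
  have h : toA G * toA F - toA F * toA G ∈ Jideal :=
    TwoSidedIdeal.subset_span
      ⟨G, F, hG, hF, (balanced_iff_ht G).2 bG, (balanced_iff_ht F).2 bF, rfl⟩
  have := Jideal.mul_mem_right _ (toA V) (Jideal.mul_mem_left (toA W) _ h)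
  unfold WEquiv
  convert this using 1
  simp only [toA_append]
  noncomm_ring

/-! ### Sufficiency -/

section Sufficiency

variable (I : TwoSidedIdeal (FreeAlgebra ℂ Bool))

/-- The class of a word in the quotient of `𝒜` by `I`. -/
noncomputable def cls (w : Word) : I.ringCon.Quotient := I.ringCon.mk' (toA w)

@[simp] lemma cls_nil : cls I [] = 1 := by simp [cls]

@[simp] lemma cls_append (u v : Word) : cls I (u ++ v) = cls I u * cls I v := by
  simp [cls]

lemma commute_cls_iff (u v : Word) :
    Commute (cls I u) (cls I v) ↔ toA u * toA v - toA v * toA u ∈ I := by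
  rw [← TwoSidedIdeal.rel_iff, ← RingCon.eq]
  simp only [cls, Commute, SemiconjBy, ← map_mul]
  rfl

/-- If balanced words of total length at most `m` commute modulo `I`, then equivalent words of
length at most `m` agree modulo `I`. -/
lemma cls_eq_of_wEquiv {m : ℕ}
    (ih : ∀ A B : Word, ht A = 0 → ht B = 0 → A.length + B.length ≤ m →
      Commute (cls I A) (cls I B))
    {X Y : Word} (h : WEquiv X Y) : X.length = Y.length ∧ (X.length ≤ m → cls I X = cls I Y) := by
  let c : Con (FreeMonoid Bool) :=
    { r := fun X Y => X.toList.length = Y.toList.length ∧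
        (X.toList.length ≤ m → cls I X.toList = cls I Y.toList)
      iseqv :=
        { refl := fun _ => ⟨rfl, fun _ => rfl⟩
          symm := fun h => ⟨h.1.symm, fun hm => (h.2 (h.1 ▸ hm)).symm⟩
          trans := fun h h' => ⟨h.1.trans h'.1, fun hm => (h.2 hm).trans (h'.2 (h.1 ▸ hm))⟩ }
      mul' := by
        rintro a b a' b' ⟨h1, h2⟩ ⟨h1', h2'⟩
        simp only [FreeMonoid.toList_mul, List.length_append, cls_append]
        refine ⟨by omega, fun hm => ?_⟩
        rw [h2 (by omega), h2' (by omega)] }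
  refine con_of_mem_span c (A := Sset) ?_ h
  rintro _ ⟨F, G, -, -, bF, bG, rfl⟩
  refine ⟨F ++ G, G ++ F, ⟨?_, fun hm => ?_⟩, by simp⟩
  · simp [add_comm]
  · simp only [FreeMonoid.toList_ofList, cls_append, List.length_append] at hm ⊢
    exact ih F G ((balanced_iff_ht F).1 bF) ((balanced_iff_ht G).1 bG) hm

lemma commute_of_balanced
    (H : ∀ U D : Word, SignedPrime 1 U → SignedPrime (-1) D →
      ∃ U' D' : Word, WEquiv U' U ∧ WEquiv D' D ∧ Commute (cls I U') (cls I D')) (m : ℕ) :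
    ∀ A B : Word, ht A = 0 → ht B = 0 → A.length + B.length ≤ m →
      Commute (cls I A) (cls I B) := by
  induction m with
  | zero =>
    intro A B _ _ h
    have : A = [] := List.length_eq_zero_iff.1 (by omega)
    subst this
    simp
  | succ m ih =>
    intro A B bA bB hAB
    by_cases hA : A = []
    · subst hA; simp
    by_cases hB : B = []
    · subst hB; simp
    obtain ⟨p, A', rfl, bA', hp⟩ := exists_prefix_signedPrime hA bA
    obtain ⟨q, B', rfl, bB', hq⟩ := exists_prefix_signedPrime hB bB
    have bp : ht p = 0 := by rcases hp with h | h <;> exact h.2.1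
    have bq : ht q = 0 := by rcases hq with h | h <;> exact h.2.1
    have lp : 0 < p.length := List.length_pos_iff.2 (by rcases hp with h | h <;> exact h.1)
    have lq : 0 < q.length := List.length_pos_iff.2 (by rcases hq with h | h <;> exact h.1)
    simp only [List.length_append] at hAB
    by_cases hA' : A' = []
    swap
    · have := List.length_pos_iff.2 hA'
      rw [cls_append I p A']
      exact (ih _ _ bp bB (by simp only [List.length_append]; omega)).mul_left
        (ih _ _ bA' bB (by simp only [List.length_append]; omega))
    by_cases hB' : B' = []
    swap
    · have := List.length_pos_iff.2 hB'
      rw [cls_append I q B']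
      exact (ih _ _ bA bq (by simp only [List.length_append]; omega)).mul_right
        (ih _ _ bA bB' (by simp only [List.length_append]; omega))
    subst hA' hB'
    simp only [List.append_nil, List.length_nil, add_zero] at hAB ⊢
    -- The words `U` and `D` are short enough to be replaced by `U'` and `D'` modulo `I`.
    have opp : ∀ U D : Word, SignedPrime 1 U → SignedPrime (-1) D → U.length ≤ m → D.length ≤ m →
        Commute (cls I U) (cls I D) := by
      intro U D hU hD lU lD
      obtain ⟨U', D', eU, eD, hc⟩ := H U D hU hD
      obtain ⟨l1, e1⟩ := cls_eq_of_wEquiv I ih eU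
      obtain ⟨l2, e2⟩ := cls_eq_of_wEquiv I ih eD
      rwa [e1 (by omega), e2 (by omega)] at hc
    -- For `xAy` and `xBy` the opposite prime `yx` in the middle lets `A` and `B` change places.
    have same : ∀ x : Bool, SignedPrime (ht [x]) p → SignedPrime (ht [x]) q →
        Commute (cls I p) (cls I q) := by
      intro x hp hq
      obtain ⟨A, zA, rfl⟩ := hp.shape rfl
      obtain ⟨B, zB, rfl⟩ := hq.shape rfl
      simp only [List.length_append, List.length_singleton] at hAB
      have bz : ht ([!x] ++ [x]) = 0 := by
        rw [ht_append, ht_singleton, ht_singleton]; cases x <;> rfl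
      have cAB := ih A B zA zB (by omega)
      have cA := ih A _ zA bz (by simp; omega)
      have cB := ih B _ zB bz (by simp; omega)
      rw [cls_append] at cA cB
      simp only [cls_append]
      generalize cls I A = a at *
      generalize cls I B = b at *
      generalize cls I [x] = u at *
      generalize cls I [!x] = v at *
      have e : a * (v * u) * b = b * (v * u) * a := by
        rw [cA.eq, cB.eq, mul_assoc (v * u), cAB.eq, ← mul_assoc]
      calc u * a * v * (u * b * v) = u * (a * (v * u) * b) * v := by simp only [mul_assoc]
        _ = u * b * v * (u * a * v) := by rw [e]; simp only [mul_assoc]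
    rcases hp with hp | hp <;> rcases hq with hq | hq
    · exact same true (by simpa [ht_singleton] using hp) (by simpa [ht_singleton] using hq)
    · exact opp p q hp hq (by omega) (by omega)
    · exact (opp q p hq hp (by omega) (by omega)).symm
    · exact same false (by simpa [ht_singleton] using hp) (by simpa [ht_singleton] using hq)

end Sufficiency

/-! ### Necessity -/

/-- The words `U'D'` with `U'` an upper prime equivalent to `U` and `D'` a lower prime equivalent
to `D`. -/
def primePairs (U D : Word) : Set Word :=
  {X | ∃ U' D', X = U' ++ D' ∧ SignedPrime 1 U' ∧ SignedPrime (-1) D' ∧ WEquiv U' U ∧ WEquiv D' D}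

/-- A swap can leave `primePairs U D` only by exchanging the two primes. Heights force this: the
cuts at both ends of `F` and `G` are at the same height, which is nonnegative inside the upper prime
and nonpositive inside the lower one, and zero only at the ends of the primes. -/
lemma swap_mem_primePairs {U D F G : Word} (hF : F ≠ []) (hG : G ≠ [])
    (bF : ht F = 0) (bG : ht G = 0) (hFG : ¬ (WEquiv F U ∧ WEquiv G D)) {W V : Word}
    (h : W ++ (F ++ (G ++ V)) ∈ primePairs U D) : W ++ (G ++ (F ++ V)) ∈ primePairs U D := by
  obtain ⟨P, Q, hX, hP, hQ, eP, eQ⟩ := h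
  -- If the primes meet exactly where `F` and `G` do, then they are `F` and `G` themselves.
  have meet : P = W ++ F → Q = G ++ V → False := by
    rintro rfl rfl
    have hW : W = [] := by
      by_contra hW
      have a := hP.2.2 W F rfl hW hF
      have b := hP.2.1
      rw [ht_append] at b
      omega
    have hV : V = [] := by
      by_contra hV
      have a := hQ.2.2 G V rfl hG hV
      omega
    subst hW hV
    simp only [List.nil_append, List.append_nil] at eP eQ
    exact hFG ⟨eP, eQ⟩
  rcases List.append_eq_append_iff.1 hX with ⟨c, rfl, hc⟩ | ⟨c, rfl, hc⟩
  · rcases List.append_eq_append_iff.1 hc with ⟨d, rfl, hd⟩ | ⟨d, rfl, hd⟩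
    · rcases List.append_eq_append_iff.1 hd with ⟨e, rfl, he⟩ | ⟨e, rfl, he⟩
      · -- `F` and `G` lie inside the upper prime.
        exact ⟨_, Q, by simp [he], hP.swap hF hG bF bG, hQ,
          (WEquiv.swap hF hG bF bG W e).trans eP, eQ⟩
      · -- The cut between the primes lies in `G`.
        exfalso
        by_cases hd0 : d = []
        · subst hd0
          exact meet (by simp) (by simpa using he)
        · have p1 := hP.2.2 (W ++ F) d (by simp) (by simp [hF]) hd0
          have p2 := hP.2.1
          by_cases he0 : e = []
          · subst he0
            simp only [ht_append, ht_nil] at p1 p2 bG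
            omega
          · have q2 := hQ.2.1
            by_cases hV : V = []
            · subst hV he
              simp only [ht_append, ht_nil] at p1 p2 bG q2
              omega
            · have q1 := hQ.2.2 e V he he0 hV
              simp only [ht_append] at p1 p2 bG
              omega
    · -- The cut between the primes lies in `F`.
      exfalso
      by_cases hd0 : d = []
      · subst hd0
        exact meet (by simp) (by simpa using hd)
      · have q1 := hQ.2.2 d (G ++ V) hd hd0 (by simp [hG])
        have p2 := hP.2.1
        by_cases hW : W = []
        · subst hW
          simp only [ht_append, ht_nil] at p2 bF
          omega
        · by_cases hc0 : c = []
          · subst hc0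
            simp only [ht_append, ht_nil] at p2 bF
            omega
          · have p1 := hP.2.2 W c rfl hW hc0
            simp only [ht_append] at p2 bF
            omega
  · -- `F` and `G` lie inside the lower prime.
    subst hc
    exact ⟨P, _, by simp, hP, hQ.swap hF hG bF bG, eP, (WEquiv.swap hF hG bF bG c V).trans eQ⟩

/-- The syntactic congruence of a set of words: two words are congruent when no context
distinguishes them. -/
def syntacticCon (T : Set Word) : Con (FreeMonoid Bool) where
  r X Y := ∀ W V : Word, W ++ (X.toList ++ V) ∈ T ↔ W ++ (Y.toList ++ V) ∈ T
  iseqv :=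
    { refl := fun _ _ _ => Iff.rfl
      symm := fun h W V => (h W V).symm
      trans := fun h h' W V => (h W V).trans (h' W V) }
  mul' := by
    intro a b a' b' h h' W V
    have h1 := h W (a'.toList ++ V)
    have h2 := h' (W ++ b.toList) V
    simp only [FreeMonoid.toList_mul, List.append_assoc] at h1 h2 ⊢
    exact h1.trans h2

/-- a subset `S*` of `S` generates `𝒥` iff for every upper prime
`U` and lower prime `D` there exist `U' ∼ U` and `D' ∼ D` with
`U'D' - D'U' ∈ S*` or `D'U' - U'D' ∈ S*`. -/
theorem stmt14 (Sstar : Set (FreeAlgebra ℂ Bool)) (hsub : Sstar ⊆ Sset) :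
    TwoSidedIdeal.span Sstar = Jideal ↔
      ∀ U D : Word, UpperPrime U → LowerPrime D →
        ∃ U' D' : Word, WEquiv U' U ∧ WEquiv D' D ∧
          (toA U' * toA D' - toA D' * toA U' ∈ Sstar ∨
            toA D' * toA U' - toA U' * toA D' ∈ Sstar) := by
  constructor
  · intro hspan U D hU hD
    rw [upperPrime_iff] at hU
    rw [lowerPrime_iff] at hD
    by_contra hno
    have hc : syntacticCon (primePairs U D) (FreeMonoid.ofList (U ++ D))
        (FreeMonoid.ofList (D ++ U)) := by
      refine con_of_mem_span _ (A := Sstar) ?_ ?_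
      · intro s hs
        obtain ⟨F, G, hF, hG, bF, bG, rfl⟩ := hsub hs
        rw [balanced_iff_ht] at bF bG
        refine ⟨F ++ G, G ++ F, fun W V => ?_, by simp⟩
        simp only [FreeMonoid.toList_ofList, List.append_assoc]
        exact ⟨swap_mem_primePairs hF hG bF bG fun h => hno ⟨F, G, h.1, h.2, Or.inl hs⟩,
          swap_mem_primePairs hG hF bG bF fun h => hno ⟨G, F, h.1, h.2, Or.inr hs⟩⟩
      · rw [hspan]
        simpa [WEquiv, Jideal] using WEquiv.swap hD.1 hU.1 hD.2.1 hU.2.1 [] []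
    have hmem : D ++ U ∈ primePairs U D := by
      have := (hc [] []).1
      simp only [FreeMonoid.toList_ofList, List.nil_append, List.append_nil] at this
      exact this ⟨U, D, rfl, hU, hD, WEquiv.refl U, WEquiv.refl D⟩
    obtain ⟨P, Q, hPQ, hP, -⟩ := hmem
    -- `D` starts with `L`, whereas an upper prime starts with `R`.
    obtain ⟨A, -, rfl⟩ := hP.shape (x := true) (by simp [ht_singleton])
    obtain ⟨B, -, rfl⟩ := hD.shape (x := false) (by simp [ht_singleton])
    simp at hPQ
  · intro H
    apply le_antisymm
    · exact TwoSidedIdeal.span_mono hsub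
    · rw [Jideal, TwoSidedIdeal.span_le]
      rintro _ ⟨F, G, -, -, bF, bG, rfl⟩
      rw [SetLike.mem_coe, ← commute_cls_iff]
      refine commute_of_balanced _ ?_ _ F G ((balanced_iff_ht F).1 bF) ((balanced_iff_ht G).1 bG)
        le_rfl
      intro U D hU hD
      obtain ⟨U', D', eU, eD, h⟩ := H U D ((upperPrime_iff U).2 hU) ((lowerPrime_iff D).2 hD)
      refine ⟨U', D', eU, eD, ?_⟩
      rcases h with h | h
      · exact (commute_cls_iff _ _ _).2 (TwoSidedIdeal.subset_span h)
      · exact ((commute_cls_iff _ _ _).2 (TwoSidedIdeal.subset_span h)).symm
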